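/- Let e¹,…,e⁶ be the dual basis of the standard basis e₁,…,e₆ of ℝ⁶, let ω₀ := e¹²+e³⁴+e⁵⁶, and let J₀ be the endomorphism of ℝ⁶ with J₀e₁ = e₂, J₀e₂ = −e₁, J₀e₃ = e₄, J₀e₄ = −e₃, J₀e₅ = e₆, J₀e₆ = −e₅. If a 2-form w on ℝ⁶ is of type (1,1), i.e. w(J₀x, J₀y) = w(x,y) for all x,y, and primitive, i.e. w∧ω₀∧ω₀ = 0, then w∧w∧ω₀ = −|w|²·e¹²³⁴⁵⁶, where |w|² := Σ_{1≤i<j≤6} w(e_i,e_j)². In particular w∧w∧ω₀ is a nonpositive multiple of the volume form e¹²³⁴⁵⁶, vanishing if and only if w = 0. -/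

import Mathlib

noncomputable section

open scoped TensorProduct

/-- `Form V k` is the space of (real-valued) k-forms on `V`, i.e. alternating
k-linear maps `V × ⋯ × V → ℝ`. -/
abbrev Form (V : Type*) [AddCommGroup V] [Module ℝ V] (k : ℕ) :=
  V [⋀^Fin k]→ₗ[ℝ] ℝ

/-- Wedge product of alternating forms (determinant/shuffle convention, so that
`(e¹ ∧ e²)(e₁, e₂) = 1`). -/
noncomputable def wedge {V : Type*} [AddCommGroup V] [Module ℝ V] {k l : ℕ}
    (f : Form V k) (g : Form V l) : Form V (k + l) :=
  ((TensorProduct.lid ℝ ℝ).toLinearMap.compAlternatingMap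
    (f.domCoprod g)).domDomCongr finSumFinEquiv
section VecEval
variable {α : Type*} (a b c d e f : α)
lemma vmk0 : ![a, b, c, d, e, f] ⟨0, by omega⟩ = a := rfl
lemma vmk1 : ![a, b, c, d, e, f] ⟨1, by omega⟩ = b := rfl
lemma vmk2 : ![a, b, c, d, e, f] ⟨2, by omega⟩ = c := rfl
lemma vmk3 : ![a, b, c, d, e, f] ⟨3, by omega⟩ = d := rfl
lemma vmk4 : ![a, b, c, d, e, f] ⟨4, by omega⟩ = e := rfl
lemma vmk5 : ![a, b, c, d, e, f] ⟨5, by omega⟩ = f := rfl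
end VecEval

/-- The dual basis 1-forms `e^i` on `ℝ⁶ = Fin 6 → ℝ`. -/
def pE (i : Fin 6) : Form (Fin 6 → ℝ) 1 :=
  AlternatingMap.ofSubsingleton ℝ (Fin 6 → ℝ) ℝ (0 : Fin 1) (LinearMap.proj i)

/-- The 2-forms `e^{ij} = e^i ∧ e^j` on `ℝ⁶`. -/
def pE2 (i j : Fin 6) : Form (Fin 6 → ℝ) 2 := wedge (pE i) (pE j)

/-- `ω₀ = e¹² + e³⁴ + e⁵⁶` on `ℝ⁶`. -/
def pOm0 : Form (Fin 6 → ℝ) 2 := pE2 0 1 + pE2 2 3 + pE2 4 5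

/-- The volume form `e¹²³⁴⁵⁶` on `ℝ⁶`. -/
def pVol : Form (Fin 6 → ℝ) 6 :=
  wedge (wedge (wedge (wedge (wedge (pE 0) (pE 1)) (pE 2)) (pE 3)) (pE 4)) (pE 5)

/-- The standard almost complex structure `J₀` on `ℝ⁶`:
`J₀e₁ = e₂, J₀e₂ = −e₁, J₀e₃ = e₄, J₀e₄ = −e₃, J₀e₅ = e₆, J₀e₆ = −e₅`. -/
def J0 : (Fin 6 → ℝ) →ₗ[ℝ] (Fin 6 → ℝ) where
  toFun x := ![-x 1, x 0, -x 3, x 2, -x 5, x 4]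
  map_add' a b := by
    funext i
    fin_cases i <;>
      simp only [Pi.add_apply, vmk0, vmk1, vmk2, vmk3, vmk4, vmk5] <;> ring
  map_smul' t a := by
    funext i
    fin_cases i <;>
      simp only [Pi.smul_apply, smul_eq_mul, RingHom.id_apply, vmk0, vmk1, vmk2,
        vmk3, vmk4, vmk5] <;> ring

/-- `|w|² = Σ_{i<j} w(e_i, e_j)²`, computed on the standard basis of `ℝ⁶`. -/
def wNormSq (w : Form (Fin 6 → ℝ) 2) : ℝ :=
  ∑ i : Fin 6, ∑ j : Fin 6,
    if i < j then (w ![Pi.single i 1, Pi.single j 1]) ^ 2 else 0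


open Equiv in
/-- Evaluate a wedge product by summing over any transversal of the shuffles. -/
lemma wedge_transversal {V : Type*} [AddCommGroup V] [Module ℝ V] {k l : ℕ}
    {ι : Type*} [Fintype ι] (f : Form V k) (g : Form V l)
    (s : ι → Perm (Fin (k + l)))
    (hcard : Fintype.card ι * (k.factorial * l.factorial) = (k + l).factorial)
    (hinj : ∀ i j, (∀ a : Fin l, ∃ b : Fin l, s i (Fin.natAdd k a) = s j (Fin.natAdd k b)) → i = j)
    (v : Fin (k + l) → V) :
    wedge f g v = ∑ i, ((Perm.sign (s i) : ℤ) : ℝ) *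
      (f (fun a => v (s i (Fin.castAdd l a))) * g (fun a => v (s i (Fin.natAdd k a)))) := by
  classical
  let q : ι → Perm.ModSumCongr (Fin k) (Fin l) := fun i =>
    Quotient.mk'' (finSumFinEquiv.symm.permCongr (s i))
  have hq : Function.Injective q := by
    intro i j hij
    obtain ⟨⟨sl, sr⟩, h⟩ := QuotientGroup.leftRel_apply.mp (Quotient.exact' hij)
    apply hinj
    intro a
    refine ⟨sr.symm a, ?_⟩
    have h2 := inv_mul_eq_iff_eq_mul.mp h.symm
    have h3 := Equiv.congr_fun h2 (Sum.inr (sr.symm a))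
    simp [Equiv.permCongr_apply] at h3
    exact h3.symm
  have hc : Fintype.card ι = Fintype.card (Perm.ModSumCongr (Fin k) (Fin l)) := by
    have h1 := Subgroup.card_eq_card_quotient_mul_card_subgroup
      (Perm.sumCongrHom (Fin k) (Fin l)).range
    have h2 : Nat.card (Perm.sumCongrHom (Fin k) (Fin l)).range = k.factorial * l.factorial := by
      rw [← Nat.card_congr (MonoidHom.ofInjective
        (Perm.sumCongrHom_injective (α := Fin k) (β := Fin l))).toEquiv]
      simp [Fintype.card_perm]
    rw [h2] at h1
    have h3 : Nat.card (Perm (Fin k ⊕ Fin l)) = (k + l).factorial := by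
      simp [Fintype.card_perm]
    rw [h3, ← hcard, Nat.card_eq_fintype_card] at h1
    exact Nat.eq_of_mul_eq_mul_right (by positivity) h1
  have hb : Function.Bijective q := (Fintype.bijective_iff_injective_and_card q).2 ⟨hq, hc⟩
  unfold wedge
  rw [AlternatingMap.domDomCongr_apply, LinearMap.compAlternatingMap_apply,
    AlternatingMap.domCoprod_apply, sum_apply, ← hb.sum_comp, map_sum]
  refine Finset.sum_congr rfl fun i _ => ?_
  simp only [q, AlternatingMap.domCoprod.summand_mk'']
  rw [_root_.smul_apply, MultilinearMap.domDomCongr_apply, MultilinearMap.domCoprod_apply]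
  rcases Int.units_eq_one_or (Perm.sign (s i)) with h | h <;>
    simp [Equiv.permCongr_apply, Perm.sign_permCongr, h]

/-- Wedge with a 1-form that vanishes on all but the last argument. -/
lemma wedge_pE_last {k : ℕ} (f : Form (Fin 6 → ℝ) k) (j : Fin 6) (v : Fin (k + 1) → (Fin 6 → ℝ))
    (h1 : v (Fin.last k) j = 1) (h0 : ∀ i : Fin k, v i.castSucc j = 0) :
    wedge f (pE j) v = f (fun i => v i.castSucc) := by
  rw [wedge_transversal f (pE j) (fun i : Fin (k + 1) => Equiv.swap (Fin.last k) i)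
    (by simp [Nat.factorial_succ])
    (by
      intro i j h
      obtain ⟨b, hb⟩ := h 0
      have e : ∀ b : Fin 1, Fin.natAdd k b = Fin.last k := by
        intro b; ext; simp
      simpa [e] using hb)]
  have e : ∀ b : Fin 1, Fin.natAdd k b = Fin.last k := by
    intro b; ext; simp
  rw [Fin.sum_univ_castSucc]
  simp only [e, Equiv.swap_apply_left, pE, AlternatingMap.ofSubsingleton_apply_apply,
    LinearMap.proj_apply, h0, h1]
  simp
  rfl

lemma wedge_term {V : Type*} [AddCommGroup V] [Module ℝ V] {k l n : ℕ}
    (f : Form V k) (g : Form V l) (v : Fin n → V) (σ : Equiv.Perm (Fin n))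
    (i : Fin k → Fin n) (j : Fin l → Fin n) (u : ℤˣ) (p : Fin k → V) (q : Fin l → V)
    (hs : Equiv.Perm.sign σ = u) (hp : ∀ a, v (σ (i a)) = p a) (hq : ∀ a, v (σ (j a)) = q a) :
    ((Equiv.Perm.sign σ : ℤ) : ℝ) * (f (fun a => v (σ (i a))) * g (fun a => v (σ (j a)))) =
      ((u : ℤ) : ℝ) * (f p * g q) := by
  rw [hs, funext hp, funext hq]

/-- The inverse-order table of the (2,2)-shuffles. -/
def shuf2 : Fin 6 → Equiv.Perm (Fin 4) :=
  ![⟨![2, 3, 0, 1], ![2, 3, 0, 1], by decide, by decide⟩,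
    ⟨![1, 3, 0, 2], ![2, 0, 3, 1], by decide, by decide⟩,
    ⟨![1, 2, 0, 3], ![2, 0, 1, 3], by decide, by decide⟩,
    ⟨![0, 3, 1, 2], ![0, 2, 3, 1], by decide, by decide⟩,
    ⟨![0, 2, 1, 3], ![0, 2, 1, 3], by decide, by decide⟩,
    ⟨![0, 1, 2, 3], ![0, 1, 2, 3], by decide, by decide⟩]
lemma wedge22 {V : Type*} [AddCommGroup V] [Module ℝ V]
    (f : Form V 2) (g : Form V 2) (v : Fin 4 → V) :
    wedge f g v =
      f ![v 2, v 3] * g ![v 0, v 1]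
      - f ![v 1, v 3] * g ![v 0, v 2]
      + f ![v 1, v 2] * g ![v 0, v 3]
      + f ![v 0, v 3] * g ![v 1, v 2]
      - f ![v 0, v 2] * g ![v 1, v 3]
      + f ![v 0, v 1] * g ![v 2, v 3] := by
  refine (wedge_transversal f g shuf2 (by decide) (by decide) v).trans ?_
  have T : ∀ (m : Fin 6) (u : ℤˣ) (p : Fin 2 → V) (q : Fin 2 → V)
      (_ : Equiv.Perm.sign (shuf2 m) = u)
      (_ : ∀ a, v (shuf2 m (Fin.castAdd 2 a)) = p a)
      (_ : ∀ a, v (shuf2 m (Fin.natAdd 2 a)) = q a), _ :=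
    fun m u p q => wedge_term f g v (shuf2 m) (Fin.castAdd 2) (Fin.natAdd 2) u p q
  simp only [Fin.sum_univ_succ, Fin.sum_univ_zero]
  have t0 := T 0 (1) ![v 2, v 3] ![v 0, v 1]
    (by decide) (by intro a; fin_cases a <;> rfl) (by intro a; fin_cases a <;> rfl)
  have t1 := T 1 (-1) ![v 1, v 3] ![v 0, v 2]
    (by decide) (by intro a; fin_cases a <;> rfl) (by intro a; fin_cases a <;> rfl)
  have t2 := T 2 (1) ![v 1, v 2] ![v 0, v 3]
    (by decide) (by intro a; fin_cases a <;> rfl) (by intro a; fin_cases a <;> rfl)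
  have t3 := T 3 (1) ![v 0, v 3] ![v 1, v 2]
    (by decide) (by intro a; fin_cases a <;> rfl) (by intro a; fin_cases a <;> rfl)
  have t4 := T 4 (-1) ![v 0, v 2] ![v 1, v 3]
    (by decide) (by intro a; fin_cases a <;> rfl) (by intro a; fin_cases a <;> rfl)
  have t5 := T 5 (1) ![v 0, v 1] ![v 2, v 3]
    (by decide) (by intro a; fin_cases a <;> rfl) (by intro a; fin_cases a <;> rfl)
  refine Eq.trans (congrArg₂ (· + ·) t0 (congrArg₂ (· + ·) t1 (congrArg₂ (· + ·) t2 (congrArg₂ (· + ·) t3 (congrArg₂ (· + ·) t4 (congrArg₂ (· + ·) t5 rfl)))))) ?_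
  push_cast
  ring

/-- The inverse-order table of the (4,2)-shuffles. -/
def shuf4 : Fin 15 → Equiv.Perm (Fin 6) :=
  ![⟨![2, 3, 4, 5, 0, 1], ![4, 5, 0, 1, 2, 3], by decide, by decide⟩,
    ⟨![1, 3, 4, 5, 0, 2], ![4, 0, 5, 1, 2, 3], by decide, by decide⟩,
    ⟨![1, 2, 4, 5, 0, 3], ![4, 0, 1, 5, 2, 3], by decide, by decide⟩,
    ⟨![1, 2, 3, 5, 0, 4], ![4, 0, 1, 2, 5, 3], by decide, by decide⟩,
    ⟨![1, 2, 3, 4, 0, 5], ![4, 0, 1, 2, 3, 5], by decide, by decide⟩,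
    ⟨![0, 3, 4, 5, 1, 2], ![0, 4, 5, 1, 2, 3], by decide, by decide⟩,
    ⟨![0, 2, 4, 5, 1, 3], ![0, 4, 1, 5, 2, 3], by decide, by decide⟩,
    ⟨![0, 2, 3, 5, 1, 4], ![0, 4, 1, 2, 5, 3], by decide, by decide⟩,
    ⟨![0, 2, 3, 4, 1, 5], ![0, 4, 1, 2, 3, 5], by decide, by decide⟩,
    ⟨![0, 1, 4, 5, 2, 3], ![0, 1, 4, 5, 2, 3], by decide, by decide⟩,
    ⟨![0, 1, 3, 5, 2, 4], ![0, 1, 4, 2, 5, 3], by decide, by decide⟩,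
    ⟨![0, 1, 3, 4, 2, 5], ![0, 1, 4, 2, 3, 5], by decide, by decide⟩,
    ⟨![0, 1, 2, 5, 3, 4], ![0, 1, 2, 4, 5, 3], by decide, by decide⟩,
    ⟨![0, 1, 2, 4, 3, 5], ![0, 1, 2, 4, 3, 5], by decide, by decide⟩,
    ⟨![0, 1, 2, 3, 4, 5], ![0, 1, 2, 3, 4, 5], by decide, by decide⟩]
lemma wedge42 {V : Type*} [AddCommGroup V] [Module ℝ V]
    (f : Form V 4) (g : Form V 2) (v : Fin 6 → V) :
    wedge f g v =
      f ![v 2, v 3, v 4, v 5] * g ![v 0, v 1]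
      - f ![v 1, v 3, v 4, v 5] * g ![v 0, v 2]
      + f ![v 1, v 2, v 4, v 5] * g ![v 0, v 3]
      - f ![v 1, v 2, v 3, v 5] * g ![v 0, v 4]
      + f ![v 1, v 2, v 3, v 4] * g ![v 0, v 5]
      + f ![v 0, v 3, v 4, v 5] * g ![v 1, v 2]
      - f ![v 0, v 2, v 4, v 5] * g ![v 1, v 3]
      + f ![v 0, v 2, v 3, v 5] * g ![v 1, v 4]
      - f ![v 0, v 2, v 3, v 4] * g ![v 1, v 5]
      + f ![v 0, v 1, v 4, v 5] * g ![v 2, v 3]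
      - f ![v 0, v 1, v 3, v 5] * g ![v 2, v 4]
      + f ![v 0, v 1, v 3, v 4] * g ![v 2, v 5]
      + f ![v 0, v 1, v 2, v 5] * g ![v 3, v 4]
      - f ![v 0, v 1, v 2, v 4] * g ![v 3, v 5]
      + f ![v 0, v 1, v 2, v 3] * g ![v 4, v 5] := by
  refine (wedge_transversal f g shuf4 (by decide) (by decide) v).trans ?_
  have T : ∀ (m : Fin 15) (u : ℤˣ) (p : Fin 4 → V) (q : Fin 2 → V)
      (_ : Equiv.Perm.sign (shuf4 m) = u)
      (_ : ∀ a, v (shuf4 m (Fin.castAdd 2 a)) = p a)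
      (_ : ∀ a, v (shuf4 m (Fin.natAdd 4 a)) = q a), _ :=
    fun m u p q => wedge_term f g v (shuf4 m) (Fin.castAdd 2) (Fin.natAdd 4) u p q
  simp only [Fin.sum_univ_succ, Fin.sum_univ_zero]
  have t0 := T 0 (1) ![v 2, v 3, v 4, v 5] ![v 0, v 1]
    (by decide) (by intro a; fin_cases a <;> rfl) (by intro a; fin_cases a <;> rfl)
  have t1 := T 1 (-1) ![v 1, v 3, v 4, v 5] ![v 0, v 2]
    (by decide) (by intro a; fin_cases a <;> rfl) (by intro a; fin_cases a <;> rfl)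
  have t2 := T 2 (1) ![v 1, v 2, v 4, v 5] ![v 0, v 3]
    (by decide) (by intro a; fin_cases a <;> rfl) (by intro a; fin_cases a <;> rfl)
  have t3 := T 3 (-1) ![v 1, v 2, v 3, v 5] ![v 0, v 4]
    (by decide) (by intro a; fin_cases a <;> rfl) (by intro a; fin_cases a <;> rfl)
  have t4 := T 4 (1) ![v 1, v 2, v 3, v 4] ![v 0, v 5]
    (by decide) (by intro a; fin_cases a <;> rfl) (by intro a; fin_cases a <;> rfl)
  have t5 := T 5 (1) ![v 0, v 3, v 4, v 5] ![v 1, v 2]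
    (by decide) (by intro a; fin_cases a <;> rfl) (by intro a; fin_cases a <;> rfl)
  have t6 := T 6 (-1) ![v 0, v 2, v 4, v 5] ![v 1, v 3]
    (by decide) (by intro a; fin_cases a <;> rfl) (by intro a; fin_cases a <;> rfl)
  have t7 := T 7 (1) ![v 0, v 2, v 3, v 5] ![v 1, v 4]
    (by decide) (by intro a; fin_cases a <;> rfl) (by intro a; fin_cases a <;> rfl)
  have t8 := T 8 (-1) ![v 0, v 2, v 3, v 4] ![v 1, v 5]
    (by decide) (by intro a; fin_cases a <;> rfl) (by intro a; fin_cases a <;> rfl)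
  have t9 := T 9 (1) ![v 0, v 1, v 4, v 5] ![v 2, v 3]
    (by decide) (by intro a; fin_cases a <;> rfl) (by intro a; fin_cases a <;> rfl)
  have t10 := T 10 (-1) ![v 0, v 1, v 3, v 5] ![v 2, v 4]
    (by decide) (by intro a; fin_cases a <;> rfl) (by intro a; fin_cases a <;> rfl)
  have t11 := T 11 (1) ![v 0, v 1, v 3, v 4] ![v 2, v 5]
    (by decide) (by intro a; fin_cases a <;> rfl) (by intro a; fin_cases a <;> rfl)
  have t12 := T 12 (1) ![v 0, v 1, v 2, v 5] ![v 3, v 4]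
    (by decide) (by intro a; fin_cases a <;> rfl) (by intro a; fin_cases a <;> rfl)
  have t13 := T 13 (-1) ![v 0, v 1, v 2, v 4] ![v 3, v 5]
    (by decide) (by intro a; fin_cases a <;> rfl) (by intro a; fin_cases a <;> rfl)
  have t14 := T 14 (1) ![v 0, v 1, v 2, v 3] ![v 4, v 5]
    (by decide) (by intro a; fin_cases a <;> rfl) (by intro a; fin_cases a <;> rfl)
  refine Eq.trans (congrArg₂ (· + ·) t0 (congrArg₂ (· + ·) t1 (congrArg₂ (· + ·) t2 (congrArg₂ (· + ·) t3 (congrArg₂ (· + ·) t4 (congrArg₂ (· + ·) t5 (congrArg₂ (· + ·) t6 (congrArg₂ (· + ·) t7 (congrArg₂ (· + ·) t8 (congrArg₂ (· + ·) t9 (congrArg₂ (· + ·) t10 (congrArg₂ (· + ·) t11 (congrArg₂ (· + ·) t12 (congrArg₂ (· + ·) t13 (congrArg₂ (· + ·) t14 rfl))))))))))))))) ?_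
  push_cast
  ring

lemma pE2_apply (i j : Fin 6) (x y : Fin 6 → ℝ) :
    pE2 i j ![x, y] = x i * y j - y i * x j := by
  unfold pE2
  refine (wedge_transversal (pE i) (pE j) (![1, Equiv.swap 0 1] : Fin 2 → Equiv.Perm (Fin 2))
    (by decide) (by decide) ![x, y]).trans ?_
  rw [Fin.sum_univ_two]
  simp only [pE, AlternatingMap.ofSubsingleton_apply_apply, LinearMap.proj_apply]
  have h : Equiv.Perm.sign (Equiv.swap (0 : Fin 2) 1) = -1 := by decide
  simp [h]
  rfl

lemma pOm0_apply (x y : Fin 6 → ℝ) :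
    pOm0 ![x, y] = (x 0 * y 1 - y 0 * x 1) + (x 2 * y 3 - y 2 * x 3)
      + (x 4 * y 5 - y 4 * x 5) := by
  unfold pOm0
  simp only [AlternatingMap.add_apply, pE2_apply]

/-- Standard basis vectors. -/
def bE (i : Fin 6) : Fin 6 → ℝ := Pi.single i 1

lemma bE_apply (i j : Fin 6) : bE i j = if j = i then 1 else 0 := by
  simp [bE, Pi.single_apply]

lemma pOm0_bE (i j : Fin 6) : pOm0 ![bE i, bE j] =
    (![![0, 1, 0, 0, 0, 0], ![-1, 0, 0, 0, 0, 0], ![0, 0, 0, 1, 0, 0], ![0, 0, -1, 0, 0, 0],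
      ![0, 0, 0, 0, 0, 1], ![0, 0, 0, 0, -1, 0]] : Fin 6 → Fin 6 → ℝ) i j := by
  rw [pOm0_apply]
  simp only [bE_apply]
  fin_cases i <;> fin_cases j <;> simp

lemma pVol_bE : pVol bE = 1 := by
  unfold pVol
  rw [wedge_pE_last, wedge_pE_last, wedge_pE_last, wedge_pE_last, wedge_pE_last]
  · simp [pE, bE_apply]
  all_goals first
    | (intro i; rw [bE_apply]; fin_cases i <;> simp)
    | (simp [bE_apply]; try decide)

lemma form6_ext (f : Form (Fin 6 → ℝ) 6) : f = f bE • pVol := by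
  have hb : ⇑(Pi.basisFun ℝ (Fin 6)) = bE := by
    funext i; simp [bE]
  have key : ∀ g : Form (Fin 6 → ℝ) 6, g = g bE • (Pi.basisFun ℝ (Fin 6)).det := fun g =>
    (g.eq_smul_basis_det (Pi.basisFun ℝ (Fin 6))).trans
      (congrArg (fun u : Fin 6 → Fin 6 → ℝ => g u • (Pi.basisFun ℝ (Fin 6)).det) hb)
  have h3 : pVol = (Pi.basisFun ℝ (Fin 6)).det :=
    (key pVol).trans ((congrArg (fun c : ℝ => c • (Pi.basisFun ℝ (Fin 6)).det) pVol_bE).trans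
      (one_smul ℝ _))
  exact (key f).trans (congrArg (fun d => f bE • d) h3.symm)

lemma J0_bE0 : J0 (bE 0) = bE 1 := by
  funext i; fin_cases i <;> simp [J0, bE_apply]
lemma J0_bE1 : J0 (bE 1) = -bE 0 := by
  funext i; fin_cases i <;> simp [J0, bE_apply]
lemma J0_bE2 : J0 (bE 2) = bE 3 := by
  funext i; fin_cases i <;> simp [J0, bE_apply]
lemma J0_bE3 : J0 (bE 3) = -bE 2 := by
  funext i; fin_cases i <;> simp [J0, bE_apply]
lemma J0_bE4 : J0 (bE 4) = bE 5 := by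
  funext i; fin_cases i <;> simp [J0, bE_apply]
lemma J0_bE5 : J0 (bE 5) = -bE 4 := by
  funext i; fin_cases i <;> simp [J0, bE_apply]

lemma form2_neg_right (w : Form (Fin 6 → ℝ) 2) (x y : Fin 6 → ℝ) :
    w ![x, -y] = - w ![x, y] := by
  have h := w.map_update_neg ![x, y] 1 y
  have e1 : Function.update ![x, y] 1 (-y) = ![x, -y] := by
    funext i; fin_cases i <;> rfl
  have e2 : Function.update ![x, y] 1 y = ![x, y] := by
    funext i; fin_cases i <;> rfl
  rwa [e1, e2] at h

lemma form2_swap (w : Form (Fin 6 → ℝ) 2) (x y : Fin 6 → ℝ) :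
    w ![y, x] = - w ![x, y] := by
  have := w.map_swap ![x, y] (show (0 : Fin 2) ≠ 1 by decide)
  rw [← this]
  congr 1
  funext i
  fin_cases i <;> rfl

lemma form2_ext (w : Form (Fin 6 → ℝ) 2)
    (h : ∀ i j : Fin 6, i < j → w ![bE i, bE j] = 0) : w = 0 := by
  refine Module.Basis.ext_alternating (Pi.basisFun ℝ (Fin 6)) fun v hv => ?_
  have hb : (fun i => Pi.basisFun ℝ (Fin 6) (v i)) = ![bE (v 0), bE (v 1)] := by
    funext i; fin_cases i <;> simp [bE]
  rw [hb, AlternatingMap.zero_apply]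
  have hne : v 0 ≠ v 1 := fun h => by simpa using hv h
  rcases lt_or_gt_of_ne hne with h1 | h1
  · exact h _ _ h1
  · rw [form2_swap, h _ _ h1, neg_zero]

set_option maxRecDepth 4000 in
/-- If a 2-form `w` on `ℝ⁶` is of type (1,1) with respect to `J₀`
(`w(J₀x, J₀y) = w(x,y)`) and primitive (`w ∧ ω₀ ∧ ω₀ = 0`), then
`w ∧ w ∧ ω₀ = −|w|² e¹²³⁴⁵⁶`; in particular `w ∧ w ∧ ω₀` is a nonpositive multiple of the
volume form, vanishing if and only if `w = 0`. -/
theorem statement8 (w : Form (Fin 6 → ℝ) 2)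
    (h11 : ∀ x y : Fin 6 → ℝ, w ![J0 x, J0 y] = w ![x, y])
    (hprim : wedge (wedge w pOm0) pOm0 = 0) :
    wedge (wedge w w) pOm0 = (-(wNormSq w)) • pVol ∧
    -(wNormSq w) ≤ 0 ∧
    (wedge (wedge w w) pOm0 = 0 ↔ w = 0) := by

  have hnn : 0 ≤ wNormSq w := by
    unfold wNormSq
    refine Finset.sum_nonneg fun i _ => Finset.sum_nonneg fun j _ => ?_
    split_ifs
    · positivity
    · exact le_rfl
  have hzero : wNormSq w = 0 → w = 0 := by
    intro h
    refine form2_ext w fun i j hij => ?_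
    unfold wNormSq at h
    have h0 : ∀ i j : Fin 6, 0 ≤ if i < j then
        (w ![Pi.single i 1, Pi.single j 1]) ^ 2 else 0 := by
      intro i j
      split_ifs
      · positivity
      · exact le_rfl
    have h1 := (Finset.sum_eq_zero_iff_of_nonneg
      (fun i _ => Finset.sum_nonneg fun j _ => h0 i j)).1 h i (Finset.mem_univ _)
    have h2 := (Finset.sum_eq_zero_iff_of_nonneg (fun j _ => h0 i j)).1 h1 j (Finset.mem_univ _)
    rw [if_pos hij] at h2
    exact pow_eq_zero_iff (two_ne_zero) |>.1 h2
  have hN : wNormSq w = ∑ i : Fin 6, ∑ j : Fin 6,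
      if i < j then (w ![bE i, bE j]) ^ 2 else 0 := rfl
  have hmain : wedge (wedge w w) pOm0 bE = -(wNormSq w) := by
    have hp : wedge (wedge w pOm0) pOm0 bE = 0 := by
      rw [hprim]; rfl
    have k02 := h11 (bE 0) (bE 2)
    have k03 := h11 (bE 0) (bE 3)
    have k04 := h11 (bE 0) (bE 4)
    have k05 := h11 (bE 0) (bE 5)
    have k24 := h11 (bE 2) (bE 4)
    have k25 := h11 (bE 2) (bE 5)
    simp only [J0_bE0, J0_bE2, J0_bE3, J0_bE4, J0_bE5, form2_neg_right]
      at k02 k03 k04 k05 k24 k25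
    refine (wedge42 (wedge w w) pOm0 bE).trans ?_
    replace hp := (wedge42 (wedge w pOm0) pOm0 bE).symm.trans hp
    simp only [pOm0_bE] at hp ⊢
    simp only [Matrix.cons_val, mul_zero, mul_one, add_zero, zero_add, sub_zero, zero_sub,
      wedge22, pOm0_bE, mul_neg, neg_zero] at hp ⊢
    rw [hN]
    simp only [Fin.sum_univ_six]
    simp (decide := true) only [if_true, if_false]
    generalize w ![bE 0, bE 1] = a01 at *
    generalize w ![bE 0, bE 2] = a02 at *
    generalize w ![bE 0, bE 3] = a03 at *
    generalize w ![bE 0, bE 4] = a04 at *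
    generalize w ![bE 0, bE 5] = a05 at *
    generalize w ![bE 1, bE 2] = a12 at *
    generalize w ![bE 1, bE 3] = a13 at *
    generalize w ![bE 1, bE 4] = a14 at *
    generalize w ![bE 1, bE 5] = a15 at *
    generalize w ![bE 2, bE 3] = a23 at *
    generalize w ![bE 2, bE 4] = a24 at *
    generalize w ![bE 2, bE 5] = a25 at *
    generalize w ![bE 3, bE 4] = a34 at *
    generalize w ![bE 3, bE 5] = a35 at *
    generalize w ![bE 4, bE 5] = a45 at *
    have e1 : a45 = -a01 - a23 := by linarith
    have e2 : a12 = -a03 := by linarith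
    have e3 : a14 = -a05 := by linarith
    have e4 : a34 = -a25 := by linarith
    subst e1 e2 e3 e4 k02 k04 k24
    ring
  have hform : wedge (wedge w w) pOm0 = (-(wNormSq w)) • pVol := by
    exact (form6_ext (wedge (wedge w w) pOm0)).trans
      (congrArg (fun c : ℝ => c • pVol) hmain)
  refine ⟨hform, by linarith, fun h => ?_, fun h => ?_⟩
  · apply hzero
    rw [h] at hmain
    have h2 : (0 : Form (Fin 6 → ℝ) 6) bE = 0 := rfl
    have h3 : (0 : ℝ) = -(wNormSq w) := h2.symm.trans hmain
    linarith
  · have h0 : wNormSq w = 0 := by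
      rw [h]; simp [wNormSq]
    rw [hform, h0, neg_zero, zero_smul]
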